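/- Cut-off property: assume ρ ∈ V₀ is regular dominant. If η ∈ Λ₁ and λ ∈ Λ₊ are such that λ − η ∉ Λ₊, then f_η(ρ+λ) = 0 (the value is defined since α(ρ+λ) ≠ 0 for all α ∈ Δ, and it vanishes). -/

import Mathlib

/-
Common framework for F. Knop, "Construction of Commuting Difference Operators
for Multiplicity Free Spaces".

We identify `Γ` with `ι → ℤ` via its basis `Σ` (so `Σ` is the standard basis),
`Γ^∨` with `ι → ℤ` via the dual basis `Σ^∨`, and `V = Hom(Γ, ℂ)` with `ι → ℂ`.
-/

open scoped BigOperators Classical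
open MvPolynomial

noncomputable section

namespace Knop

variable {ι : Type*} [Fintype ι] [DecidableEq ι]

/-- The `i`-th element of the basis `Σ` of `Γ` (resp. of `Σ^∨ ⊆ Γ^∨`), in coordinates. -/
def e (i : ι) : ι → ℤ := Pi.single i 1

/-- The pairing between `Γ` and `Γ^∨` (in coordinates, the dot product);
`pairZ γ η = γ(η) = η(γ)`. -/
def pairZ (γ η : ι → ℤ) : ℤ := ∑ i, γ i * η i

/-- Evaluation of `γ ∈ Γ` as a linear function on `V = Hom(Γ,ℂ) ≅ ι → ℂ`. -/
def evalC (γ : ι → ℤ) (z : ι → ℂ) : ℂ := ∑ i, (γ i : ℂ) * z i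

/-- The embedding `Γ^∨ ⊆ V`. -/
def toV (η : ι → ℤ) : ι → ℂ := fun i => (η i : ℂ)

/-- The action of `w ∈ Aut(Γ)` on `V = Hom(Γ, ℂ)`: `(w • z)(γ) = z(w⁻¹ γ)`, in coordinates. -/
def actV (w : (ι → ℤ) ≃ₗ[ℤ] (ι → ℤ)) (z : ι → ℂ) : ι → ℂ :=
  fun i => evalC (w.symm (e i)) z

/-- The action of `w ∈ Aut(Γ)` on `Γ^∨ = Hom(Γ, ℤ)`: `(w • η)(γ) = η(w⁻¹ γ)`. -/
def actDual (w : (ι → ℤ) ≃ₗ[ℤ] (ι → ℤ)) (η : ι → ℤ) : ι → ℤ :=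
  fun i => pairZ (w.symm (e i)) η

/-- `Λ₊`, the `ℕ`-span of `Σ^∨` inside `Γ^∨`. -/
def LamPlus : Set (ι → ℤ) := {η | ∀ i, 0 ≤ η i}

/-- The reflection `s_α(x) = x - α^∨(x)·α` attached to a root `α` with coroot `αv`. -/
def reflMap (α αv : ι → ℤ) : (ι → ℤ) → (ι → ℤ) := fun x => x - pairZ x αv • α

/-- The data `(Γ, Σ, W, ℓ)` together with the axioms C1–C8 of Knop's paper
(in the coordinates given by `Σ`).  The root system `Δ` of `W`, the set
`Φ = W·Σ`, and `Λ₁ = W·Σ^∨₁` are carried along as `Finset`s with their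
defining specifications. -/
structure Data (ι : Type*) [Fintype ι] [DecidableEq ι] where
  /-- the reflection group `W ⊆ Aut(Γ)` -/
  W : Subgroup ((ι → ℤ) ≃ₗ[ℤ] (ι → ℤ))
  /-- `W` is finite -/
  W_finite : (W : Set ((ι → ℤ) ≃ₗ[ℤ] (ι → ℤ))).Finite
  /-- the element `ℓ ∈ Γ` -/
  ell : ι → ℤ
  /-- the set of roots `Δ ⊆ Γ` of `W` -/
  Δ : Finset (ι → ℤ)
  /-- the coroot `α^∨ ∈ Γ^∨` of a root `α` -/
  coroot : (ι → ℤ) → (ι → ℤ)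
  /-- `Φ = W·Σ` -/
  Φ : Finset (ι → ℤ)
  /-- `Λ₁ = W·Σ^∨₁` -/
  Λ₁ : Finset (ι → ℤ)
  Φ_spec : ∀ ω, ω ∈ Φ ↔ ∃ w ∈ W, ∃ i, ω = w (e i)
  Λ₁_spec : ∀ η, η ∈ Λ₁ ↔ ∃ w ∈ W, ∃ i, ell i = 1 ∧ η = actDual w (e i)
  /-- `Δ = -Δ` -/
  Δ_neg : ∀ α ∈ Δ, -α ∈ Δ
  /-- every root is a primitive vector of `Γ` -/
  Δ_prim : ∀ α ∈ Δ, ∀ (n : ℤ) (β : ι → ℤ), α = n • β → IsUnit n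
  /-- the reflection `s_α` belongs to `W` -/
  refl_mem : ∀ α ∈ Δ, ∃ w ∈ W, ∀ x, w x = reflMap α (coroot α) x
  /-- `α^∨(α) = 2` -/
  coroot_pair : ∀ α ∈ Δ, pairZ α (coroot α) = 2
  /-- C1: `W` is generated by the reflections `s_α`, `α ∈ Δ` -/
  C1 : W ≤ Subgroup.closure {w : (ι → ℤ) ≃ₗ[ℤ] (ι → ℤ) |
        ∃ α ∈ Δ, ∀ x, w x = reflMap α (coroot α) x}
  /-- C2: `Δ = Δ⁺ ∪ (-Δ⁺)` -/
  C2 : ∀ α ∈ Δ, (∀ i, 0 ≤ α i) ∨ (∀ i, α i ≤ 0)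
  /-- C3: `Φ ⊆ Φ⁺ ∪ (-Φ⁺)` -/
  C3 : ∀ ω ∈ Φ, (∀ i, 0 ≤ ω i) ∨ (∀ i, ω i ≤ 0)
  /-- C4: `ℓ ∈ Γ^W` -/
  C4 : ∀ w ∈ W, w ell = ell
  /-- C5: `Σ_{ω ∈ Φ⁺} ω - Σ_{α ∈ Δ⁺} α = ℓ` -/
  C5 : (∑ ω ∈ Φ.filter (fun ω => ∀ i, 0 ≤ ω i), ω)
        - (∑ α ∈ Δ.filter (fun α => ∀ i, 0 ≤ α i), α) = ell
  /-- C6: `ℓ(η) > 0` for all `η ∈ Σ^∨` -/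
  C6 : ∀ i, 0 < ell i
  /-- C7: `ω(η) ∈ {-1,0,1}` for `η ∈ Σ^∨₁` and `ω ∈ Δ ∪ Φ` -/
  C7 : ∀ i, ell i = 1 → ∀ ω, (ω ∈ Δ ∨ ω ∈ Φ) → ω i = -1 ∨ ω i = 0 ∨ ω i = 1
  /-- C8: a `W`-invariant linear function on `V` is determined by its restriction to `Σ^∨₁` -/
  C8 : ∀ c c' : ι → ℂ,
    (∀ w ∈ W, ∀ z : ι → ℂ, ∑ i, c i * actV w z i = ∑ i, c i * z i) →
    (∀ w ∈ W, ∀ z : ι → ℂ, ∑ i, c' i * actV w z i = ∑ i, c' i * z i) →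
    (∀ i, ell i = 1 → c i = c' i) → c = c'

namespace Data

variable (D : Data ι)

/-- `Δ⁺`, the positive roots. -/
def Δpos : Finset (ι → ℤ) := D.Δ.filter fun α => ∀ i, 0 ≤ α i

/-- `Φ⁺`. -/
def Φpos : Finset (ι → ℤ) := D.Φ.filter fun ω => ∀ i, 0 ≤ ω i

/-- The submonoid `Λ` of `Γ^∨` generated by `Λ₁`. -/
def Lam : AddSubmonoid (ι → ℤ) := AddSubmonoid.closure (D.Λ₁ : Set (ι → ℤ))

/-- `ρ ∈ V₀`: `ω₁(ρ) = ω₂(ρ)` whenever `ω₁, ω₂ ∈ Σ` lie in the same `±W`-orbit. -/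
def InV0 (ρ : ι → ℂ) : Prop :=
  ∀ i j : ι, (∃ w ∈ D.W, e i = w (e j) ∨ e i = -(w (e j))) → ρ i = ρ j

/-- `k` is the multiplicity-parameter function of `ρ ∈ V₀`:
`k_ω = ω₁(ρ)` for any `ω₁ ∈ (±W)·ω ∩ Σ`. -/
def IsK (ρ : ι → ℂ) (k : (ι → ℤ) → ℂ) : Prop :=
  ∀ (ω : ι → ℤ) (i : ι), (∃ w ∈ D.W, e i = w ω ∨ e i = -(w ω)) → k ω = ρ i

/-- `ρ` is dominant: `α(ρ) ∉ {-1,-2,…}` for all `α ∈ Δ⁺`. -/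
def Dominant (ρ : ι → ℂ) : Prop :=
  ∀ α ∈ D.Δpos, ∀ n : ℕ, evalC α ρ ≠ -((n : ℂ) + 1)

/-- `ρ` is regular: `α(ρ) ≠ 0` for all `α ∈ Δ⁺`. -/
def Regular (ρ : ι → ℂ) : Prop :=
  ∀ α ∈ D.Δpos, evalC α ρ ≠ 0

/-- `ρ` is non-integral: `α(ρ) ∉ ℤ` for all `α ∈ Δ`. -/
def NonIntegral (ρ : ι → ℂ) : Prop :=
  ∀ α ∈ D.Δ, ∀ n : ℤ, evalC α ρ ≠ (n : ℂ)

/-- `ρ` is strongly dominant (`k` being the parameter function of `ρ`). -/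
def StronglyDominant (ρ : ι → ℂ) (k : (ι → ℤ) → ℂ) : Prop :=
  D.Regular ρ ∧ D.Dominant ρ ∧
    ∀ ω ∈ D.Φpos, (∀ n : ℕ, evalC ω ρ - k ω ≠ -((n : ℂ) + 1)) ∧
      (∀ n : ℕ, evalC ω ρ + k ω ≠ -(n : ℂ))

/-- The rational function `f_η`, `η ∈ Λ₁`. -/
def f (k : (ι → ℤ) → ℂ) (η : ι → ℤ) (z : ι → ℂ) : ℂ :=
  (∏ ω ∈ D.Φ.filter (fun ω => 0 < pairZ ω η), (evalC ω z - k ω)) /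
  (∏ α ∈ D.Δ.filter (fun α => 0 < pairZ α η), evalC α z)

/-- The value at `z` of `L(p) = Σ_{η ∈ Λ₁} f_η T_η (p)`. -/
def Lval (k : (ι → ℤ) → ℂ) (p : MvPolynomial ι ℂ) (z : ι → ℂ) : ℂ :=
  ∑ η ∈ D.Λ₁, D.f k η z * eval (z - toV η) p

/-- `W`-invariance of a polynomial function on `V`. -/
def WInv (p : MvPolynomial ι ℂ) : Prop :=
  ∀ w ∈ D.W, ∀ z : ι → ℂ, eval (actV w z) p = eval z p

/-- The defining property of the Capelli polynomial `p_λ` (with shift `ρ`):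
`p` is `W`-invariant of degree `≤ ℓ(λ)` and `p(ρ+μ) = δ_{λμ}` for all
`μ ∈ Λ₊` with `ℓ(μ) ≤ ℓ(λ)`. -/
def CapelliAt (ρ : ι → ℂ) (lam : ι → ℤ) (p : MvPolynomial ι ℂ) : Prop :=
  D.WInv p ∧ (p.totalDegree : ℤ) ≤ pairZ D.ell lam ∧
    ∀ μ : ι → ℤ, μ ∈ LamPlus → pairZ D.ell μ ≤ pairZ D.ell lam →
      eval (ρ + toV μ) p = if μ = lam then 1 else 0

/-- Axiom C0: for some regular dominant `ρ' ∈ V₀` and every `λ ∈ Λ₊` there is a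
unique `W`-invariant polynomial of degree `ℓ(λ)` with `p(ρ'+μ) = δ_{λμ}` for all
`μ ∈ Λ₊` with `ℓ(μ) ≤ ℓ(λ)`. -/
def C0 : Prop :=
  ∃ ρ' : ι → ℂ, D.InV0 ρ' ∧ D.Regular ρ' ∧ D.Dominant ρ' ∧
    ∀ lam : ι → ℤ, lam ∈ LamPlus →
      ∃! p : MvPolynomial ι ℂ, D.WInv p ∧
        p.totalDegree = (pairZ D.ell lam).toNat ∧
        ∀ μ : ι → ℤ, μ ∈ LamPlus → pairZ D.ell μ ≤ pairZ D.ell lam →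
          eval (ρ' + toV μ) p = if μ = lam then 1 else 0

end Data

/-- The `m`-th point `τ_m` of the path starting at `lam` with step sequence `s`
(steps are meant to lie in `Λ₁`). -/
def pathPt (lam : ι → ℤ) {d : ℕ} (s : Fin d → ι → ℤ) (m : ℕ) : ι → ℤ :=
  lam + ∑ i ∈ Finset.univ.filter (fun i : Fin d => (i : ℕ) < m), s i

/-- All paths of length `d` from `lam` to `mu` (with steps in `Λ₁`), encoded by
their step sequences. -/
def paths (D : Data ι) (lam mu : ι → ℤ) (d : ℕ) : Finset (Fin d → ι → ℤ) :=
  (Fintype.piFinset fun _ : Fin d => D.Λ₁).filter fun s => pathPt lam s d = mu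

/-- All positive paths of length `d` from `lam` to `mu`. -/
def posPaths (D : Data ι) (lam mu : ι → ℤ) (d : ℕ) : Finset (Fin d → ι → ℤ) :=
  (Fintype.piFinset fun _ : Fin d => D.Λ₁).filter fun s =>
    (∀ m ≤ d, pathPt lam s m ∈ LamPlus) ∧ pathPt lam s d = mu

/-- The falling factorial `[x ↓ d] = x(x-1)⋯(x-d+1)`. -/
def ffall (x : ℂ) (d : ℤ) : ℂ := ∏ j ∈ Finset.range d.toNat, (x - (j : ℂ))

namespace Data

variable (D : Data ι)

/-- The generalized rational function `f_τ`, `τ ∈ Λ` (formula (Def-f-l)). -/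
def fgen (k : (ι → ℤ) → ℂ) (τ : ι → ℤ) (z : ι → ℂ) : ℂ :=
  (∏ ω ∈ D.Φ.filter (fun ω => 0 < pairZ ω τ), ffall (evalC ω z - k ω) (pairZ ω τ)) /
  (∏ α ∈ D.Δ.filter (fun α => 0 < pairZ α τ), ffall (evalC α z) (pairZ α τ))

/-- The virtual dimension `d_λ = (-1)^{ℓ(λ)} f_λ(-ρ) / f_λ(ρ+λ)`. -/
def vdim (k : (ι → ℤ) → ℂ) (ρ : ι → ℂ) (lam : ι → ℤ) : ℂ :=
  (-1 : ℂ) ^ (pairZ D.ell lam) * D.fgen k lam (-ρ) / D.fgen k lam (ρ + toV lam)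

/-- The rational function `b_τ^h` (formula (Def-b-t)); here the sum runs over
all paths from `0` to `τ` of length `d = ℓ(τ)`. -/
def bfun (k : (ι → ℤ) → ℂ) (h : MvPolynomial ι ℂ) (τ : ι → ℤ) (z : ι → ℂ) : ℂ :=
  ∑ s ∈ paths D 0 τ (pairZ D.ell τ).toNat,
    (∑ i ∈ Finset.range ((pairZ D.ell τ).toNat + 1),
      ((-1 : ℂ) ^ ((pairZ D.ell τ).toNat - i) /
        ((Nat.factorial i : ℂ) * (Nat.factorial ((pairZ D.ell τ).toNat - i) : ℂ))) *
        eval (z - toV (pathPt 0 s i)) h) *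
    ∏ i : Fin (pairZ D.ell τ).toNat, D.fgen k (s i) (z - toV (pathPt 0 s (i : ℕ)))

/-- The difference operator `D_h = Σ_{τ ∈ Λ} b_τ^h T_τ`, acting on functions on `V`. -/
def Dop (k : (ι → ℤ) → ℂ) (h : MvPolynomial ι ℂ) (F : (ι → ℂ) → ℂ) (z : ι → ℂ) : ℂ :=
  ∑ᶠ τ ∈ (D.Lam : Set (ι → ℤ)), D.bfun k h τ z * F (z - toV τ)

/-- The order relation on `Λ`: `τ₁ ≤ τ₂` iff `ℓ(τ₁) < ℓ(τ₂)`, or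
`ℓ(τ₁) = ℓ(τ₂)` and `τ₂ - τ₁` is a sum of positive coroots. -/
def ordLe (τ₁ τ₂ : ι → ℤ) : Prop :=
  pairZ D.ell τ₁ < pairZ D.ell τ₂ ∨
    (pairZ D.ell τ₁ = pairZ D.ell τ₂ ∧
      τ₂ - τ₁ ∈ AddSubmonoid.closure (D.coroot '' (D.Δpos : Set (ι → ℤ))))

end Data


/-- Lemma 2.2, cut-off property: if `ρ ∈ V₀` is regular dominant,
`η ∈ Λ₁` and `λ ∈ Λ₊` with `λ - η ∉ Λ₊`, then `α(ρ+λ) ≠ 0` for all `α ∈ Δ`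
(so `f_η(ρ+λ)` is defined) and `f_η(ρ+λ) = 0`. -/
theorem statement1 (D : Data ι) (ρ : ι → ℂ) (hρ : D.InV0 ρ)
    (hreg : D.Regular ρ) (hdom : D.Dominant ρ)
    (k : (ι → ℤ) → ℂ) (hk : D.IsK ρ k)
    (η : ι → ℤ) (hη : η ∈ D.Λ₁) (lam : ι → ℤ) (hlam : lam ∈ LamPlus)
    (hsub : lam - η ∉ LamPlus) :
    (∀ α ∈ D.Δ, evalC α (ρ + toV lam) ≠ 0) ∧ D.f k η (ρ + toV lam) = 0 := by
  have hadd : ∀ γ : ι → ℤ, evalC γ (ρ + toV lam) = evalC γ ρ + ((pairZ γ lam : ℤ) : ℂ) := by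
    intro γ
    simp only [evalC, pairZ, toV, Pi.add_apply, mul_add, Finset.sum_add_distrib]
    push_cast
    rfl
  have hneg : ∀ (γ : ι → ℤ) (z : ι → ℂ), evalC (-γ) z = -evalC γ z := by
    intro γ z
    simp [evalC]
  have hpos : ∀ α ∈ D.Δpos, evalC α (ρ + toV lam) ≠ 0 := by
    intro α hα h0
    have hα' := (Finset.mem_filter.mp hα).2
    have hn : 0 ≤ pairZ α lam := Finset.sum_nonneg fun i _ => mul_nonneg (hα' i) (hlam i)
    obtain ⟨n, hn⟩ := Int.eq_ofNat_of_zero_le hn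
    rw [hadd, hn] at h0
    cases n with
    | zero => exact hreg α hα (by simpa using h0)
    | succ m =>
      apply hdom α hα m
      push_cast at h0
      exact eq_neg_of_add_eq_zero_left h0
  refine ⟨?_, ?_⟩
  · intro α hα
    rcases D.C2 α hα with h | h
    · exact hpos α (Finset.mem_filter.mpr ⟨hα, h⟩)
    · have := hpos (-α) (Finset.mem_filter.mpr
        ⟨D.Δ_neg α hα, fun i => by simpa using h i⟩)
      rw [hneg] at this
      exact fun h0 => this (by simp [h0])
  · have hex : ∃ i, lam i < η i := by
      by_contra hcon
      push Not at hcon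
      exact hsub fun i => by simpa using hcon i
    obtain ⟨i, hi⟩ := hex
    obtain ⟨w, hw, j, hj, rfl⟩ := (D.Λ₁_spec η).mp hη
    have hval : actDual w (e j) i = (w.symm (e i)) j := by
      simp [actDual, pairZ, e, Pi.single_apply]
    have hle := D.C7 j hj (w.symm (e i))
      (Or.inr ((D.Φ_spec _).mpr ⟨w⁻¹, D.W.inv_mem hw, i, rfl⟩))
    have hl : 0 ≤ lam i := hlam i
    rw [hval] at hi
    have hl0 : lam i = 0 := by omega
    have hpair : ∀ η' : ι → ℤ, pairZ (e i) η' = η' i := by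
      intro η'
      simp [pairZ, e, Pi.single_apply]
    have hmem : e i ∈ D.Φ := (D.Φ_spec _).mpr ⟨1, D.W.one_mem, i, rfl⟩
    have hki : k (e i) = ρ i := hk (e i) i ⟨1, D.W.one_mem, Or.inl rfl⟩
    unfold Data.f
    rw [Finset.prod_eq_zero (i := e i), zero_div]
    · rw [Finset.mem_filter, hpair, hval]
      exact ⟨hmem, by omega⟩
    · rw [hadd, hpair, hl0, hki]
      simp [evalC, e, Pi.single_apply]

end Knop

end
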